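/- arXiv:math/0207110 — 8 statements merged into one kernel-verified Lean document; each statement's English description precedes it below -/
import Mathlib

section
/- Let n ≥ 1 and let d ≤ n. Let f be a multivariate polynomial with complex coefficients in the variables indexed by Fin n × Fin n (the entries of an n×n matrix). Suppose that for every real n×n matrix A that is positive semidefinite (in particular symmetric) and has rank at most d, evaluating f at the complexified entries of A (i.e., at the function p ↦ (A p.1 p.2 : ℂ)) gives 0. Then for every complex n×n matrix B with Bᵀ = B and rank B ≤ d, evaluating f at the entries of B gives 0. -/
open Matrix ComplexOrder

/-!
Over `ℂ` every symmetric matrix is congruent to a diagonal one, and diagonal entries have square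
roots, so a symmetric `B` of rank at most `d` is a complex Gram matrix `X * Xᵀ` with at most `d`
columns (`exists_eq_mul_transpose`). Pulling `f` back along `X ↦ X * Xᵀ` gives a polynomial in the
entries of `X` that vanishes at every real `X`, because `X * Xᵀ` is then real positive
semidefinite of rank at most `d`. Since `ℝ` is an infinite subset of `ℂ`, a polynomial vanishing at
all real points is zero, so the pullback also vanishes at complex `X`
(`eval_mul_transpose_eq_zero`).
-/

/-- A complex symmetric matrix is a Gram matrix for the bilinear (not sesquilinear) dot product,
with as many columns as its rank. -/
theorem exists_eq_mul_transpose {n : ℕ} (B : Matrix (Fin n) (Fin n) ℂ) (hB : Bᵀ = B) :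
    ∃ (S : Finset (Fin n)) (X : Matrix (Fin n) S ℂ), S.card = B.rank ∧ B = X * Xᵀ := by
  classical
  have : Invertible (2 : ℂ) := invertibleOfNonzero two_ne_zero
  obtain ⟨v, hv⟩ := LinearMap.BilinForm.exists_orthogonal_basis (B := Matrix.toBilin' B)
    ⟨(Matrix.isSymm_toBilin'_iff_isSymm.mpr hB).eq⟩
  have hfr : Module.finrank ℂ (Fin n → ℂ) = n := by simp
  let w := v.reindex (finCongr hfr)
  have hw : ∀ i j, i ≠ j → w i ⬝ᵥ B *ᵥ w j = 0 := by
    intro i j hij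
    have := @hv ((finCongr hfr).symm i) ((finCongr hfr).symm j) (by simpa using hij)
    simpa [w, Function.onFun, Matrix.toBilin'_apply'] using this
  -- `P` is the change of basis matrix whose columns are the orthogonal basis `w`.
  let P : Matrix (Fin n) (Fin n) ℂ := (Pi.basisFun ℂ (Fin n)).toMatrix w
  let Q : Matrix (Fin n) (Fin n) ℂ := w.toMatrix (Pi.basisFun ℂ (Fin n))
  have hPQ : P * Q = 1 := Module.Basis.toMatrix_mul_toMatrix_flip _ _
  have hPu : IsUnit P.det := by
    rw [← Matrix.isUnit_iff_isUnit_det]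
    exact IsUnit.of_mul_eq_one _ hPQ
  let D : Fin n → ℂ := fun i => w i ⬝ᵥ B *ᵥ w i
  have hD : Pᵀ * B * P = diagonal D := by
    have hP : ∀ i j, P i j = w j i := fun i j => by simp [P, Module.Basis.toMatrix_apply]
    ext i j
    have : (Pᵀ * B * P) i j = w i ⬝ᵥ B *ᵥ w j := by
      rw [Matrix.mul_assoc, Matrix.mul_apply]
      simp [dotProduct, mulVec, Matrix.mul_apply, hP]
    rw [this]
    by_cases hij : i = j
    · subst hij; simp [D]
    · rw [hw i j hij, diagonal_apply_ne _ hij]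
  have hBD : B = Qᵀ * diagonal D * Q := by
    have hQP : Qᵀ * Pᵀ = 1 := by rw [← transpose_mul, hPQ, transpose_one]
    calc B = (Qᵀ * Pᵀ) * B * (P * Q) := by rw [hQP, hPQ]; simp
      _ = Qᵀ * (Pᵀ * B * P) * Q := by simp only [Matrix.mul_assoc]
      _ = _ := by rw [hD]
  have hrank : B.rank = Fintype.card {i // D i ≠ 0} := by
    rw [← Matrix.rank_diagonal, ← hD, rank_mul_eq_left_of_isUnit_det _ _ hPu,
      rank_mul_eq_right_of_isUnit_det _ _ (by rwa [det_transpose])]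
  choose s hs using fun i => IsAlgClosed.exists_pow_nat_eq (D i) (n := 2) two_pos
  refine ⟨Finset.univ.filter fun i => D i ≠ 0, Matrix.of fun i k => Q k i * s k, ?_, ?_⟩
  · rw [hrank, Fintype.card_subtype]
  · conv_lhs => rw [hBD]
    ext i j
    have h1 : (Qᵀ * diagonal D * Q) i j = ∑ k, (Q k i * s k) * (Q k j * s k) := by
      rw [Matrix.mul_apply]
      refine Finset.sum_congr rfl fun k _ => ?_
      rw [mul_diagonal, transpose_apply, ← hs k]
      ring
    rw [h1, Matrix.mul_apply]
    simp only [Matrix.of_apply, transpose_apply]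
    rw [Finset.sum_coe_sort _ fun k => (Q k i * s k) * (Q k j * s k)]
    -- The columns with `D k = 0` vanish, so restricting to the support loses nothing.
    refine (Finset.sum_subset (Finset.filter_subset _ _) fun k _ hk => ?_).symm
    have hk0 : D k = 0 := by simpa using hk
    have hsk : s k = 0 := by simpa [hk0] using hs k
    simp [hsk]

/-- A polynomial vanishing on all real Gram matrices `Y * Yᵀ` with column index `ι` vanishes on
all complex ones. -/
theorem eval_mul_transpose_eq_zero {n : ℕ} {ι : Type*} [Fintype ι]
    (f : MvPolynomial (Fin n × Fin n) ℂ)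
    (hf : ∀ Y : Matrix (Fin n) ι ℝ,
      MvPolynomial.eval (fun p : Fin n × Fin n => (((Y * Yᵀ) p.1 p.2 : ℝ) : ℂ)) f = 0)
    (X : Matrix (Fin n) ι ℂ) :
    MvPolynomial.eval (fun p : Fin n × Fin n => (X * Xᵀ) p.1 p.2) f = 0 := by
  let g : MvPolynomial (Fin n × ι) ℂ :=
    MvPolynomial.bind₁ (fun p => ∑ k, MvPolynomial.X (p.1, k) * MvPolynomial.X (p.2, k)) f
  have hg : ∀ x : Fin n × ι → ℂ, MvPolynomial.eval x g =
      MvPolynomial.eval (fun p => ∑ k, x (p.1, k) * x (p.2, k)) f := by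
    intro x
    simp only [g, MvPolynomial.eval, MvPolynomial.eval₂Hom_bind₁]
    simp
  have hg0 : g = 0 := by
    refine MvPolynomial.funext_set (fun _ => Set.range ((↑) : ℝ → ℂ))
      (fun _ => Set.infinite_range_of_injective Complex.ofReal_injective) fun x hx => ?_
    choose y hy using fun i => hx i (Set.mem_univ i)
    rw [hg, map_zero, ← hf (Matrix.of fun i k => y (i, k))]
    simp [Matrix.mul_apply, hy]
  have := hg fun q => X q.1 q.2
  rw [hg0, map_zero] at this
  simpa [Matrix.mul_apply] using this.symm

theorem stmt_0 (n d : ℕ) (hn : 1 ≤ n) (hd : d ≤ n)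
    (f : MvPolynomial (Fin n × Fin n) ℂ)
    (hf : ∀ A : Matrix (Fin n) (Fin n) ℝ, A.PosSemidef → A.rank ≤ d →
      MvPolynomial.eval (fun p : Fin n × Fin n => (A p.1 p.2 : ℂ)) f = 0) :
    ∀ B : Matrix (Fin n) (Fin n) ℂ, Bᵀ = B → B.rank ≤ d →
      MvPolynomial.eval (fun p : Fin n × Fin n => B p.1 p.2) f = 0 := by
  classical
  intro B hB hr
  obtain ⟨S, X, hS, hX⟩ := exists_eq_mul_transpose B hB
  rw [hX]
  refine eval_mul_transpose_eq_zero f (fun Y => hf _ ?_ ?_) X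
  · rw [← conjTranspose_eq_transpose_of_trivial]
    exact posSemidef_self_mul_conjTranspose Y
  · calc (Y * Yᵀ).rank ≤ Y.rank := rank_mul_le_left _ _
      _ ≤ Fintype.card S := rank_le_card_width _
      _ = B.rank := by rw [← hS, Fintype.card_coe]
      _ ≤ d := hr
end

section
/- Let A be a complex n×n matrix with Aᵀ = A. Then rank A ≤ d if and only if there exist vectors w₁, …, w_d ∈ ℂⁿ such that A = Σ_{i=1}^{d} wᵢ wᵢᵀ, i.e., A = Σᵢ Matrix.vecMulVec (w i) (w i). -/
open Matrix ComplexOrder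

/-!
A sum of `d` matrices `w wᵀ` factors as `Wᵀ W` with `W` of size `d × n` (the rows being the `w i`),
so its rank is at most `d`.

Conversely, a symmetric bilinear form over `ℂ` has an orthogonal basis, so a symmetric `A` is
congruent to a diagonal matrix: `A = Qᵀ diag(D) Q` with `Q` invertible. The rank of `A` is the
number of nonzero `D j`, and each nonzero term `D j • q qᵀ` (with `q` the `j`-th row of `Q`) is
`w wᵀ` for `w = √(D j) • q`. Padding with zero vectors gives exactly `d` terms.
-/

/-- Diagonalisation of a complex symmetric matrix by congruence, obtained from an orthogonal basis
of the associated bilinear form. -/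
lemma exists_congr_diagonal {n : ℕ} (A : Matrix (Fin n) (Fin n) ℂ) (hA : Aᵀ = A) :
    ∃ (Q : Matrix (Fin n) (Fin n) ℂ) (D : Fin n → ℂ), IsUnit Q.det ∧
      A = Qᵀ * diagonal D * Q := by
  have hB : (Matrix.toBilin' A).IsSymm := Matrix.isSymm_toBilin'_iff_isSymm.2 hA
  obtain ⟨v₀, hv₀⟩ := LinearMap.BilinForm.exists_orthogonal_basis
    (B := Matrix.toBilin' A) ⟨fun x y => hB.eq x y⟩
  have hn : Module.finrank ℂ (Fin n → ℂ) = n := by simp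
  let v : Module.Basis (Fin n) ℂ (Fin n → ℂ) := v₀.reindex (finCongr hn)
  let b := Pi.basisFun ℂ (Fin n)
  have hD : LinearMap.BilinForm.toMatrix v (Matrix.toBilin' A) =
      diagonal fun i => Matrix.toBilin' A (v i) (v i) := by
    ext i j
    rw [LinearMap.BilinForm.toMatrix_apply, diagonal_apply]
    split_ifs with h
    · rw [h]
    · simp only [v, Module.Basis.reindex_apply]
      exact hv₀ (fun h' => h ((finCongr hn).symm.injective h'))
  refine ⟨v.toMatrix b, fun i => Matrix.toBilin' A (v i) (v i), ?_, ?_⟩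
  · exact (Matrix.isUnit_iff_isUnit_det _).1 ⟨⟨v.toMatrix b, b.toMatrix v, by simp, by simp⟩, rfl⟩
  · rw [← hD, LinearMap.BilinForm.toMatrix_mul_basis_toMatrix, LinearMap.BilinForm.toMatrix_basisFun,
      LinearMap.BilinForm.toMatrix'_toBilin']

theorem stmt_1 (n d : ℕ) (A : Matrix (Fin n) (Fin n) ℂ) (hA : Aᵀ = A) :
    A.rank ≤ d ↔ ∃ w : Fin d → (Fin n → ℂ),
      A = ∑ i : Fin d, Matrix.vecMulVec (w i) (w i) := by
  classical
  constructor
  · intro h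
    obtain ⟨Q, D, hQ, hAD⟩ := exists_congr_diagonal A hA
    have hr : A.rank = Fintype.card {j // D j ≠ 0} := by
      rw [hAD, rank_mul_eq_left_of_isUnit_det _ _ hQ,
        rank_mul_eq_right_of_isUnit_det _ _ (by rwa [det_transpose]), rank_diagonal]
    obtain ⟨f⟩ : Nonempty ({j // D j ≠ 0} ↪ Fin d) :=
      Function.Embedding.nonempty_of_card_le (by simpa [← hr] using h)
    choose s hs using fun j => IsAlgClosed.exists_eq_mul_self (D j)
    let g : {j // D j ≠ 0} → Fin n → ℂ := fun j => s j • Q j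
    -- the vectors indexed outside the range of `f` are the zero padding
    refine ⟨Function.extend f g 0, ?_⟩
    have hsum : ∑ j, vecMulVec (g j) (g j) = ∑ i : Fin d,
        vecMulVec (Function.extend f g 0 i) (Function.extend f g 0 i) := by
      refine Fintype.sum_of_injective f f.injective _ _ (fun i hi => ?_) (fun j => ?_)
      · rw [Function.extend_apply' _ _ _ (by simpa using hi)]
        simp
      · rw [f.injective.extend_apply]
    have hsub : ∑ j, vecMulVec (g j) (g j) = ∑ j, vecMulVec (s j • Q j) (s j • Q j) := by
      refine Fintype.sum_of_injective Subtype.val Subtype.val_injective _ _ (fun j hj => ?_)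
        (fun j => rfl)
      have hDj : D j = 0 := by simpa using hj
      have hsj : s j = 0 := by simpa [hDj] using hs j
      simp [hsj]
    rw [← hsum, hsub, hAD]
    ext a b
    rw [mul_apply]
    simp only [mul_diagonal, transpose_apply, Matrix.sum_apply, vecMulVec_apply,
      Pi.smul_apply, smul_eq_mul]
    refine Finset.sum_congr rfl fun j _ => ?_
    rw [hs j]
    ring
  · rintro ⟨w, hw⟩
    have hW : A = (of w)ᵀ * of w := by
      ext a b
      simp [hw, Matrix.sum_apply, mul_apply, vecMulVec_apply]
    rw [hW]
    exact (rank_mul_le_right _ _).trans (rank_le_height _)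
end

section
/- A complex n×n matrix A with Aᵀ = A satisfies rank A ≤ 2 if and only if there exist vectors u, v ∈ ℂⁿ such that A = (1/2)(u vᵀ + v uᵀ), i.e., A = (1/2) • (Matrix.vecMulVec u v + Matrix.vecMulVec v u). -/
open Matrix ComplexOrder

/-!
A matrix `½(u vᵀ + v uᵀ)` factors through `ℂ²`, so its rank is at most two. Conversely, a complex
symmetric matrix is congruent to a diagonal one, and absorbing square roots of the diagonal
entries writes it as a sum of `rank A` squares `x xᵀ` (`exists_sum_vecMulVec_self`). For rank at
most two this leaves `x xᵀ + y yᵀ`, which is the polarization of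
`(x + i y)(x - i y) = x² + y²`, i.e. `u = x + i y` and `v = x - i y`.
-/

/-- Diagonalization by congruence over `ℂ`: a symmetric matrix is a sum of at most `rank A`
squares `x xᵀ`. -/
lemma exists_sum_vecMulVec_self {n : ℕ} (A : Matrix (Fin n) (Fin n) ℂ) (hA : Aᵀ = A) :
    ∃ (m : ℕ) (s : Finset (Fin m)) (f : Fin m → Fin n → ℂ),
      s.card ≤ A.rank ∧ A = ∑ i ∈ s, vecMulVec (f i) (f i) := by
  classical
  let e := Pi.basisFun ℂ (Fin n)
  let B : LinearMap.BilinForm ℂ (Fin n → ℂ) := Matrix.toBilin e A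
  have hB : B.IsSymm := (Matrix.isSymm_toBilin_iff_isSymm e).2 hA
  have hBA : LinearMap.BilinForm.toMatrix e B = A := LinearMap.BilinForm.toMatrix_toBilin e A
  have : Invertible (2 : ℂ) := invertibleOfNonzero two_ne_zero
  obtain ⟨b, hb⟩ := LinearMap.BilinForm.exists_orthogonal_basis
    (LinearMap.BilinForm.isSymm_iff.1 hB)
  let d := fun i => B (b i) (b i)
  have hD : LinearMap.BilinForm.toMatrix b B = diagonal d := by
    ext i j
    rw [LinearMap.BilinForm.toMatrix_apply, diagonal_apply]
    split_ifs with h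
    · subst h; rfl
    · exact hb h
  have h1 := LinearMap.BilinForm.toMatrix_mul_basis_toMatrix e b B
  have h2 := LinearMap.BilinForm.toMatrix_mul_basis_toMatrix b e B
  rw [hBA, hD] at h1 h2
  have hr : (diagonal d).rank ≤ A.rank := by
    rw [← h1]
    exact (rank_mul_le_left _ _).trans (rank_mul_le_right _ _)
  rw [rank_diagonal, Fintype.card_subtype] at hr
  choose r hr2 using fun i => IsAlgClosed.exists_pow_nat_eq (d i) (n := 2) two_pos
  refine ⟨_, Finset.univ.filter fun i => d i ≠ 0, fun i a => r i * b.toMatrix e i a, hr, ?_⟩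
  rw [Finset.sum_filter_of_ne]
  · conv_lhs => rw [← h2]
    ext a c
    rw [Matrix.mul_apply, Matrix.sum_apply]
    refine Finset.sum_congr rfl fun i _ => ?_
    rw [mul_diagonal, vecMulVec_apply, transpose_apply, ← hr2 i]
    ring
  · intro i _ hi h0
    apply hi
    have : r i = 0 := by
      have := hr2 i
      rw [h0] at this
      exact pow_eq_zero_iff two_ne_zero |>.1 this
    ext a c
    simp [vecMulVec_apply, this]

lemma exists_two_of_card_le_two {n m : ℕ} (s : Finset (Fin m)) (f : Fin m → Fin n → ℂ)
    (hs : s.card ≤ 2) :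
    ∃ x y : Fin n → ℂ,
      ∑ i ∈ s, vecMulVec (f i) (f i) = vecMulVec x x + vecMulVec y y := by
  classical
  have h : s.card = 0 ∨ s.card = 1 ∨ s.card = 2 := by omega
  rcases h with h | h | h
  · rw [Finset.card_eq_zero] at h
    exact ⟨0, 0, by simp [h]⟩
  · obtain ⟨i, rfl⟩ := Finset.card_eq_one.1 h
    exact ⟨f i, 0, by simp⟩
  · obtain ⟨i, j, hij, rfl⟩ := Finset.card_eq_two.1 h
    exact ⟨f i, f j, Finset.sum_pair hij⟩

theorem stmt_2 (n : ℕ) (A : Matrix (Fin n) (Fin n) ℂ) (hA : Aᵀ = A) :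
    A.rank ≤ 2 ↔ ∃ u v : Fin n → ℂ,
      A = (1 / 2 : ℂ) • (Matrix.vecMulVec u v + Matrix.vecMulVec v u) := by
  constructor
  · intro h
    obtain ⟨m, s, f, hs, hAs⟩ := exists_sum_vecMulVec_self A hA
    obtain ⟨x, y, hxy⟩ := exists_two_of_card_le_two s f (hs.trans h)
    refine ⟨x + Complex.I • y, x - Complex.I • y, ?_⟩
    rw [hAs, hxy]
    ext a c
    simp only [Matrix.add_apply, Matrix.smul_apply, vecMulVec_apply, Pi.add_apply, Pi.sub_apply,
      Pi.smul_apply, smul_eq_mul]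
    linear_combination (y a * y c) * Complex.I_sq
  · rintro ⟨u, v, rfl⟩
    -- The matrix is the product of the `n × 2` matrix `(u v)` and the `2 × n` matrix `½(v u)ᵀ`.
    have h : (1 / 2 : ℂ) • (vecMulVec u v + vecMulVec v u) =
        (Matrix.of ![u, v])ᵀ * Matrix.of ![(1 / 2 : ℂ) • v, (1 / 2 : ℂ) • u] := by
      ext a c
      simp [Matrix.mul_apply, Fin.sum_univ_two, vecMulVec_apply]
      ring
    rw [h]
    refine (rank_mul_le_left _ _).trans ((rank_le_card_width _).trans ?_)
    simp
end

section
/- Let n ≥ 2 and let s : Fin n → Fin n → ℂ satisfy s i j = s j i for all i, j and s i i = 0 for all i. Define the (n+1)×(n+1) Cayley matrix S by: S 0 0 = 0, S 0 (i+1) = S (i+1) 0 = 1 for all i : Fin n, and S (i+1) (j+1) = s i j; define the (n−1)×(n−1) Gram matrix A by A i j = (1/2)(s 0 (i+1) + s 0 (j+1) − s (i+1) (j+1)) for i, j : Fin (n−1). Then rank S = rank A + 2. -/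
open Matrix ComplexOrder

/-!
By rank-nullity it suffices that `ker S` and `ker A` have the same dimension. Write a vector in the
domain of `S` as `(x, y, v)`, with `x` the coordinate of the bordering index and `y` that of the
first point. The first two rows of `S (x, y, v) = 0` say `y = -∑ j, v j` and
`x = -∑ j, s 0 (j + 1) * v j`. Substituting these in row `i + 2` leaves `-2 (A v) i`, so dropping
the first two coordinates identifies `ker S` with `ker A`.
-/

/-- The embedding `v ↦ (-∑ j, c j * v j, -∑ j, v j, v)`. For `c j = s 0 (j + 1)` it maps the
kernel of the Gram matrix onto the kernel of the Cayley matrix. -/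
noncomputable def kernelLift {k : ℕ} (c : Fin k → ℂ) : (Fin k → ℂ) →ₗ[ℂ] (Fin (k + 2) → ℂ) where
  toFun v := Fin.cons (-∑ j, c j * v j) (Fin.cons (-∑ j, v j) v : Fin (k + 1) → ℂ)
  map_add' v w := by
    ext i
    refine Fin.cases ?_ (fun i => Fin.cases ?_ (fun i => ?_) i) i <;>
      simp [mul_add, Finset.sum_add_distrib] <;> ring
  map_smul' a v := by
    ext i
    refine Fin.cases ?_ (fun i => Fin.cases ?_ (fun i => ?_) i) i
    · simp [Finset.mul_sum, mul_left_comm]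
    · simp [Finset.mul_sum]
    · simp

lemma kernelLift_injective {k : ℕ} (c : Fin k → ℂ) : Function.Injective (kernelLift c) := by
  intro v w h
  ext i
  simpa [kernelLift] using congrFun h i.succ.succ




theorem stmt_5 (m : ℕ) (s : Fin (m + 2) → Fin (m + 2) → ℂ)
    (hsym : ∀ i j, s i j = s j i) (hdiag : ∀ i, s i i = 0)
    (S : Matrix (Fin (m + 3)) (Fin (m + 3)) ℂ)
    (hS00 : S 0 0 = 0)
    (hSrow : ∀ i : Fin (m + 2), S 0 i.succ = 1)
    (hScol : ∀ i : Fin (m + 2), S i.succ 0 = 1)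
    (hSij : ∀ i j : Fin (m + 2), S i.succ j.succ = s i j)
    (A : Matrix (Fin (m + 1)) (Fin (m + 1)) ℂ)
    (hA : ∀ i j : Fin (m + 1),
      A i j = (1 / 2 : ℂ) * (s 0 i.succ + s 0 j.succ - s i.succ j.succ)) :
    S.rank = A.rank + 2 := by
  -- Rows `i + 2` of `S`, after substituting the values forced by the first two rows.
  have key : ∀ (v : Fin (m + 1) → ℂ) (i : Fin (m + 1)),
      (-∑ j, s 0 j.succ * v j) + (s i.succ 0 * (-∑ j, v j) + ∑ j, s i.succ j.succ * v j)
        = -2 * (A *ᵥ v) i := by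
    intro v i
    simp only [Matrix.mulVec, dotProduct, hA, hsym i.succ 0, Finset.mul_sum,
      ← Finset.sum_neg_distrib, ← Finset.sum_add_distrib]
    refine Finset.sum_congr rfl fun j _ => ?_
    ring
  have hker : (LinearMap.ker A.mulVecLin).map (kernelLift fun j => s 0 j.succ)
      = LinearMap.ker S.mulVecLin := by
    ext x
    simp only [Submodule.mem_map, LinearMap.mem_ker, Matrix.mulVecLin_apply]
    constructor
    · rintro ⟨v, hv, rfl⟩
      ext i
      refine Fin.cases ?_ (fun i => Fin.cases ?_ (fun i => ?_) i) i
      · simp [kernelLift, Matrix.mulVec, dotProduct, Fin.sum_univ_succ (n := m + 2),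
          Fin.sum_univ_succ (n := m + 1), hS00, hSrow]
      · simp [kernelLift, Matrix.mulVec, dotProduct, Fin.sum_univ_succ (n := m + 2),
          Fin.sum_univ_succ (n := m + 1), hScol, hSij, hdiag,
          -Fin.succ_zero_eq_one, -Fin.succ_zero_eq_one']
      · have h := key v i
        rw [hv] at h
        simpa [kernelLift, Matrix.mulVec, dotProduct, Fin.sum_univ_succ (n := m + 2),
          Fin.sum_univ_succ (n := m + 1), hScol, hSij] using h
    · intro hx
      have h0 := congrFun hx 0
      have h1 := congrFun hx (Fin.succ 0)
      simp only [Matrix.mulVec, dotProduct, Fin.sum_univ_succ (n := m + 2),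
        Fin.sum_univ_succ (n := m + 1), hS00, hSrow, hScol, hSij, hdiag, Pi.zero_apply,
        zero_mul, one_mul, zero_add] at h0 h1
      have e0 := eq_neg_of_add_eq_zero_left h0
      have e1 := eq_neg_of_add_eq_zero_left h1
      refine ⟨fun j => x j.succ.succ, ?_, ?_⟩
      · ext i
        have h2 := congrFun hx i.succ.succ
        simp only [Matrix.mulVec, dotProduct, Fin.sum_univ_succ (n := m + 2),
          Fin.sum_univ_succ (n := m + 1), hScol, hSij, Pi.zero_apply, one_mul] at h2
        rw [e0, e1, key (fun j => x j.succ.succ) i] at h2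
        simpa using h2
      · ext i
        refine Fin.cases ?_ (fun i => Fin.cases ?_ (fun i => ?_) i) i
        · simpa [kernelLift] using e1.symm
        · simpa [kernelLift] using e0.symm
        · simp [kernelLift]
  have hdim : Module.finrank ℂ (LinearMap.ker S.mulVecLin)
      = Module.finrank ℂ (LinearMap.ker A.mulVecLin) := by
    rw [← hker]
    exact (Submodule.equivMapOfInjective _ (kernelLift_injective _) _).finrank_eq.symm
  have hS := S.mulVecLin.finrank_range_add_finrank_ker
  have hA' := A.mulVecLin.finrank_range_add_finrank_ker
  simp only [Module.finrank_fin_fun] at hS hA'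
  unfold Matrix.rank
  omega
end

section
/- Let n ≥ 2 and let s : Fin n → Fin n → ℂ satisfy s i j = s j i for all i, j and s i i = 0 for all i. Define the (n+1)×(n+1) Cayley matrix S by: S 0 0 = 0, S 0 (i+1) = S (i+1) 0 = 1 for all i : Fin n, and S (i+1) (j+1) = s i j; define the (n−1)×(n−1) Gram matrix A by A i j = (1/2)(s 0 (i+1) + s 0 (j+1) − s (i+1) (j+1)) for i, j : Fin (n−1). Then det S = (−1)ⁿ · 2^{n−1} · det A. -/
open Matrix ComplexOrder

/-!
Subtracting the row of the origin point from the rows of the other points `i`, and then subtracting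
`s i 0` times the bordering row, leaves the determinant of `S` unchanged and turns row `i` into
`(0, 0, s i j - s 0 j - s i 0) = (0, 0, -2 A i j)`, where `s 0 0 = 0` is used.  The resulting matrix
has the rows `(0, 1, 1, …, 1)` and `(1, 0, s 0 j)` on top, so expanding twice along the first column
gives `det S = -det (-2 A)`.
-/

/-- A matrix with top rows `(0, 1, *)` and `(1, *, *)` and lower rows `(0, 0, C)` has determinant
`-det C`. -/
lemma det_of_top_rows {k : ℕ} (B : Matrix (Fin (k + 2)) (Fin (k + 2)) ℂ)
    (C : Matrix (Fin k) (Fin k) ℂ)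
    (h00 : B 0 0 = 0) (h01 : B 0 1 = 1) (h10 : B 1 0 = 1)
    (hi0 : ∀ i : Fin k, B i.succ.succ 0 = 0) (hi1 : ∀ i : Fin k, B i.succ.succ 1 = 0)
    (hij : ∀ i j : Fin k, B i.succ.succ j.succ.succ = C i j) :
    B.det = -C.det := by
  have hsub : (B.submatrix (Fin.succAbove 1) Fin.succ).det = C.det := by
    rw [det_succ_column_zero, Fin.sum_univ_succ, Finset.sum_eq_zero]
    · have hC : (B.submatrix (Fin.succAbove 1) Fin.succ).submatrix
          (Fin.succAbove 0) Fin.succ = C := by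
        ext i j
        simp [← hij]
      rw [hC]
      simp [h01]
    · intro i _
      simp [hi1]
  rw [det_succ_column_zero, Fin.sum_univ_succ, Fin.sum_univ_succ, Finset.sum_eq_zero]
  · simp [h00, h10, hsub]
  · intro i _
    simp [hi0]

theorem stmt_6 (m : ℕ) (s : Fin (m + 2) → Fin (m + 2) → ℂ)
    (hsym : ∀ i j, s i j = s j i) (hdiag : ∀ i, s i i = 0)
    (S : Matrix (Fin (m + 3)) (Fin (m + 3)) ℂ)
    (hS00 : S 0 0 = 0)
    (hSrow : ∀ i : Fin (m + 2), S 0 i.succ = 1)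
    (hScol : ∀ i : Fin (m + 2), S i.succ 0 = 1)
    (hSij : ∀ i j : Fin (m + 2), S i.succ j.succ = s i j)
    (A : Matrix (Fin (m + 1)) (Fin (m + 1)) ℂ)
    (hA : ∀ i j : Fin (m + 1),
      A i j = (1 / 2 : ℂ) * (s 0 i.succ + s 0 j.succ - s i.succ j.succ)) :
    S.det = (-1) ^ (m + 2) * 2 ^ (m + 1) * A.det := by
  have h01 : S 0 1 = 1 := hSrow 0
  have h10 : S 1 0 = 1 := hScol 0
  have h11 : S 1 1 = 0 := (hSij 0 0).trans (hdiag 0)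
  have h1j (j : Fin (m + 1)) : S 1 j.succ.succ = s 0 j.succ := hSij 0 j.succ
  have hi1 (i : Fin (m + 1)) : S i.succ.succ 1 = s i.succ 0 := hSij i.succ 0
  -- `B₁` is `S` after the first round of row operations, `B₂` after the second.
  let B₁ : Matrix (Fin (m + 3)) (Fin (m + 3)) ℂ :=
    Matrix.of (Fin.cons (S 0) (Fin.cons (S 1) fun i j => S i.succ.succ j - S 1 j))
  let B₂ : Matrix (Fin (m + 3)) (Fin (m + 3)) ℂ :=
    Matrix.of (Fin.cons (S 0) (Fin.cons (S 1) fun i j =>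
      S i.succ.succ j - S 1 j - s i.succ 0 * S 0 j))
  have b10 (j) : B₁ 0 j = S 0 j := rfl
  have b11 (j) : B₁ 1 j = S 1 j := rfl
  have b1i (i : Fin (m + 1)) (j) : B₁ i.succ.succ j = S i.succ.succ j - S 1 j := rfl
  have b20 (j) : B₂ 0 j = S 0 j := rfl
  have b21 (j) : B₂ 1 j = S 1 j := rfl
  have b2i (i : Fin (m + 1)) (j) :
      B₂ i.succ.succ j = S i.succ.succ j - S 1 j - s i.succ 0 * S 0 j := rfl
  have e₁ : S.det = B₁.det := by
    refine det_eq_of_forall_row_eq_smul_add_const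
      (Fin.cons 0 (Fin.cons 0 fun _ => 1) : Fin (m + 3) → ℂ) 1 rfl fun i j => ?_
    refine Fin.cases ?_ (Fin.cases ?_ fun i => ?_) i
    · simp [b10]
    · simp [b11]
    · simp [b1i, b11]
  have e₂ : B₁.det = B₂.det := by
    refine det_eq_of_forall_row_eq_smul_add_const
      (Fin.cons 0 (Fin.cons 0 fun i => s i.succ 0) : Fin (m + 3) → ℂ) 0 rfl fun i j => ?_
    refine Fin.cases ?_ (Fin.cases ?_ fun i => ?_) i
    · simp [b10, b20]
    · simp [b11, b21]
    · simp [b1i, b2i, b20]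
  have e₃ : B₂.det = -((-2 : ℂ) • A).det := by
    refine det_of_top_rows B₂ _ ?_ ?_ ?_ (fun i => ?_) (fun i => ?_) (fun i j => ?_)
    · rw [b20, hS00]
    · rw [b20, h01]
    · rw [b21, h10]
    · rw [b2i, hScol, h10, hS00]; ring
    · rw [b2i, hi1, h11, h01]; ring
    · rw [b2i, hSij, h1j, hSrow, Matrix.smul_apply, hA, smul_eq_mul, hsym i.succ 0]; ring
  rw [e₁, e₂, e₃, det_smul, Fintype.card_fin, neg_pow (2 : ℂ)]
  ring
end

section
/- Let n ≥ 1 and let d ≤ n. Let f be a multivariate polynomial with complex coefficients in the variables indexed by Fin n × Fin n (the entries of an n×n complex matrix). Suppose that for every complex n×n matrix A that is positive semidefinite (in particular Hermitian) and has rank at most d, evaluating f at the entries of A gives 0. Then for every complex n×n matrix B with rank B ≤ d, evaluating f at the entries of B gives 0. -/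
/-!
A matrix `B` of rank `r ≤ d` factors as `B = C * D` with inner dimension `r`. The polynomial map
`(X, Y) ↦ (X + iY)(X - iY)ᵀ` on pairs of `n × r` matrices sends a pair of real matrices to the Gram
matrix `Z * Zᴴ` with `Z = X + iY`, which is positive semidefinite of rank at most `r`. Hence the
pullback of `f` along this map vanishes at all real points, so it is the zero polynomial. Over `ℂ`
the matrices `X + iY` and `X - iY` can be prescribed independently, so the map also
attains `C * D = B`, and `f` vanishes there.
-/

open Matrix ComplexOrder

/-- Rank factorization: the columns of `C` are a basis of the column space of `B`, and the columns
of `D` are the coordinates of the columns of `B` in that basis. -/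
lemma exists_rank_factorization {n : ℕ} (B : Matrix (Fin n) (Fin n) ℂ) :
    ∃ (C : Matrix (Fin n) (Fin B.rank) ℂ) (D : Matrix (Fin B.rank) (Fin n) ℂ), B = C * D := by
  let b : Module.Basis (Fin B.rank) ℂ (LinearMap.range B.mulVecLin) := Module.finBasis ℂ _
  let v : Fin n → LinearMap.range B.mulVecLin := fun j =>
    ⟨B.mulVecLin (Pi.single j 1), LinearMap.mem_range_self _ _⟩
  refine ⟨Matrix.of fun i k => (b k : Fin n → ℂ) i, Matrix.of fun k j => b.repr (v j) k, ?_⟩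
  ext i j
  have h := congrArg (fun w : LinearMap.range B.mulVecLin => (w : Fin n → ℂ) i) (b.sum_repr (v j))
  have hv : (v j : Fin n → ℂ) i = B i j := by simp [v]
  simp only [hv, Submodule.coe_sum, Submodule.coe_smul, Finset.sum_apply, Pi.smul_apply,
    smul_eq_mul] at h
  rw [← h, Matrix.mul_apply]
  exact Finset.sum_congr rfl fun k _ => mul_comm _ _

/-- The pullback of `f` along `(X, Y) ↦ (X + iY)(X - iY)ᵀ`. The variables `Sum.inl p` are the
entries of `X`, and the variables `Sum.inr p` those of `Y`. -/
noncomputable def gramPullback {n r : ℕ} (f : MvPolynomial (Fin n × Fin n) ℂ) :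
    MvPolynomial ((Fin n × Fin r) ⊕ (Fin n × Fin r)) ℂ :=
  MvPolynomial.bind₁ (fun p : Fin n × Fin n => ∑ k : Fin r,
    (MvPolynomial.X (Sum.inl (p.1, k)) + MvPolynomial.C Complex.I *
        MvPolynomial.X (Sum.inr (p.1, k))) *
      (MvPolynomial.X (Sum.inl (p.2, k)) - MvPolynomial.C Complex.I *
        MvPolynomial.X (Sum.inr (p.2, k)))) f

lemma eval_gramPullback {n r : ℕ} (f : MvPolynomial (Fin n × Fin n) ℂ)
    (x : (Fin n × Fin r) ⊕ (Fin n × Fin r) → ℂ) :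
    MvPolynomial.eval x (gramPullback f) =
      MvPolynomial.eval (fun p : Fin n × Fin n => ∑ k : Fin r,
        (x (Sum.inl (p.1, k)) + Complex.I * x (Sum.inr (p.1, k))) *
          (x (Sum.inl (p.2, k)) - Complex.I * x (Sum.inr (p.2, k)))) f := by
  rw [gramPullback, MvPolynomial.eval, MvPolynomial.eval₂Hom_bind₁]
  refine congrArg (fun g => MvPolynomial.eval g f) (funext fun p => ?_)
  change MvPolynomial.eval x _ = _
  simp

theorem stmt_10 (n d : ℕ) (hn : 1 ≤ n) (hd : d ≤ n)
    (f : MvPolynomial (Fin n × Fin n) ℂ)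
    (hf : ∀ A : Matrix (Fin n) (Fin n) ℂ, A.PosSemidef → A.rank ≤ d →
      MvPolynomial.eval (fun p : Fin n × Fin n => A p.1 p.2) f = 0) :
    ∀ B : Matrix (Fin n) (Fin n) ℂ, B.rank ≤ d →
      MvPolynomial.eval (fun p : Fin n × Fin n => B p.1 p.2) f = 0 := by
  intro B hB
  obtain ⟨C, D, hCD⟩ := exists_rank_factorization B
  have hzero : gramPullback (r := B.rank) f = 0 := by
    refine MvPolynomial.funext_set (fun _ => Set.range ((↑) : ℝ → ℂ))
      (fun _ => Set.infinite_range_of_injective Complex.ofReal_injective) fun x hx => ?_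
    have hreal : ∀ s, star (x s) = x s := fun s => by
      obtain ⟨t, ht⟩ := hx s (Set.mem_univ s)
      rw [← ht]
      exact Complex.conj_ofReal t
    let Z : Matrix (Fin n) (Fin B.rank) ℂ :=
      Matrix.of fun i k => x (Sum.inl (i, k)) + Complex.I * x (Sum.inr (i, k))
    have hrank : (Z * Zᴴ).rank ≤ d :=
      (rank_mul_le_left _ _).trans ((rank_le_width Z).trans hB)
    rw [map_zero, eval_gramPullback, ← hf _ (posSemidef_self_mul_conjTranspose Z) hrank]
    congr 2
    funext p
    have hI : star Complex.I = -Complex.I := Complex.conj_I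
    simp only [Z, Matrix.mul_apply, conjTranspose_apply, of_apply, star_add, star_mul', hreal, hI]
    exact Finset.sum_congr rfl fun k _ => by ring
  -- Solve `X + iY = C`, `X - iY = Dᵀ` for `X` and `Y`.
  have h := eval_gramPullback (r := B.rank) f (Sum.elim (fun p => (C p.1 p.2 + D p.2 p.1) / 2)
    (fun p => -Complex.I * (C p.1 p.2 - D p.2 p.1) / 2))
  rw [hzero, map_zero] at h
  rw [h]
  congr 2
  funext p
  rw [congrFun (congrFun hCD p.1) p.2, Matrix.mul_apply]
  refine Finset.sum_congr rfl fun k _ => ?_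
  have hplus : ∀ a b : ℂ, (a + b) / 2 + Complex.I * (-Complex.I * (a - b) / 2) = a :=
    fun a b => by linear_combination (-(a - b) / 2) * Complex.I_mul_I
  have hminus : ∀ a b : ℂ, (a + b) / 2 - Complex.I * (-Complex.I * (a - b) / 2) = b :=
    fun a b => by linear_combination ((a - b) / 2) * Complex.I_mul_I
  simp only [Sum.elim_inl, Sum.elim_inr, hplus, hminus]
end

section
/- Let A be a complex n×n positive semidefinite matrix. Then trace A and trace (A * A) are real (their imaginary parts are zero), and (trace (A * A)).re ≤ ((trace A).re)², with equality (trace (A * A)).re = ((trace A).re)² if and only if rank A ≤ 1. -/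
open Matrix ComplexOrder

/-!
With `l i ≥ 0` the eigenvalues of `A` and `S = ∑ i, l i`, the spectral theorem gives `tr A = S`
and `tr (A * A) = ∑ i, l i ^ 2`, so that
`(tr A) ^ 2 - tr (A * A) = ∑ i, l i * (S - l i)`.
Every summand is nonnegative because `l i ≤ S`, and all of them vanish exactly when at most one
eigenvalue is nonzero, that is, when `A` has rank at most one.
-/

lemma sq_sum_sub_sum_sq {ι : Type*} [Fintype ι] (l : ι → ℝ) :
    (∑ i, l i) ^ 2 - ∑ i, l i ^ 2 = ∑ i, l i * ((∑ j, l j) - l i) := by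
  simp only [mul_sub, Finset.sum_sub_distrib, ← Finset.sum_mul, sq]

lemma mul_sum_sub_nonneg {ι : Type*} [Fintype ι] (l : ι → ℝ) (hl : ∀ i, 0 ≤ l i) (i : ι) :
    0 ≤ l i * ((∑ j, l j) - l i) :=
  mul_nonneg (hl i) (sub_nonneg.2
    (Finset.single_le_sum (fun j _ => hl j) (Finset.mem_univ i)))

lemma sum_sq_eq_sq_sum_iff {ι : Type*} [Fintype ι] (l : ι → ℝ) (hl : ∀ i, 0 ≤ l i) :
    ∑ i, l i ^ 2 = (∑ i, l i) ^ 2 ↔ ∀ i j, l i ≠ 0 → l j ≠ 0 → i = j := by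
  classical
  rw [eq_comm, ← sub_eq_zero, sq_sum_sub_sum_sq,
    Finset.sum_eq_zero_iff_of_nonneg (fun i _ => mul_sum_sub_nonneg l hl i)]
  constructor
  · intro h i j hi hj
    by_contra hij
    have hS : (∑ k, l k) - l i = 0 := (mul_eq_zero.1 (h i (Finset.mem_univ i))).resolve_left hi
    have hpair : l i + l j ≤ ∑ k, l k := by
      rw [← Finset.sum_pair hij]
      exact Finset.sum_le_sum_of_subset_of_nonneg (Finset.subset_univ _) (fun k _ _ => hl k)
    exact hj (le_antisymm (by linarith) (hl j))
  · intro h i _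
    by_cases hi : l i = 0
    · simp [hi]
    · have hS : ∑ k, l k = l i := Finset.sum_eq_single i
        (fun k _ hk => by_contra fun hk0 => hk (h k i hk0 hi))
        (fun hi' => absurd (Finset.mem_univ i) hi')
      simp [hS]

lemma trace_mul_self_eq_sum_eigenvalues_sq {n : ℕ} {A : Matrix (Fin n) (Fin n) ℂ}
    (hA : A.IsHermitian) : (A * A).trace = ((∑ i, hA.eigenvalues i ^ 2 : ℝ) : ℂ) := by
  conv_lhs => rw [hA.spectral_theorem, ← map_mul, Unitary.conjStarAlgAut_apply,
    Matrix.trace_mul_comm, ← mul_assoc]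
  simp [Matrix.trace_diagonal, sq]

theorem stmt_15 (n : ℕ) (A : Matrix (Fin n) (Fin n) ℂ) (hA : A.PosSemidef) :
    A.trace.im = 0 ∧ (A * A).trace.im = 0 ∧
    (A * A).trace.re ≤ A.trace.re ^ 2 ∧
    ((A * A).trace.re = A.trace.re ^ 2 ↔ A.rank ≤ 1) := by
  have htr : A.trace = ((∑ i, hA.1.eigenvalues i : ℝ) : ℂ) := by
    rw [hA.1.trace_eq_sum_eigenvalues]
    simp
  rw [htr, trace_mul_self_eq_sum_eigenvalues_sq hA.1, hA.1.rank_eq_card_non_zero_eigs]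
  refine ⟨Complex.ofReal_im _, Complex.ofReal_im _, ?_, ?_⟩
  · rw [Complex.ofReal_re, Complex.ofReal_re, ← sub_nonneg, sq_sum_sub_sum_sq]
    exact Finset.sum_nonneg fun i _ => mul_sum_sub_nonneg _ hA.eigenvalues_nonneg i
  · rw [Complex.ofReal_re, Complex.ofReal_re, sum_sq_eq_sq_sum_iff _ hA.eigenvalues_nonneg,
      Fintype.card_le_one_iff]
    simp only [Subtype.forall, Subtype.mk.injEq]
    exact ⟨fun h i hi j hj => h i j hi hj, fun h i j hi hj => h i hi j hj⟩
end

section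
/- Let x₁, x₂, x₃, x₄, λ, μ, r be real numbers with x₁² + x₂² = 1, x₃² + x₄² = 1, and (λ − 1)² + (μ − 1)² = r². Set a = λx₁, b = λx₂, c = μx₃, d = μx₄. Then ((a² + b² + c² + d²)² − 2r²(a² + b² + c² + d²) + (2 − r²)²)² = 64(a² + b²)(c² + d²). -/
open Matrix ComplexOrder

theorem stmt_19 (x₁ x₂ x₃ x₄ lam mu r a b c d : ℝ)
    (h1 : x₁ ^ 2 + x₂ ^ 2 = 1) (h2 : x₃ ^ 2 + x₄ ^ 2 = 1)
    (h3 : (lam - 1) ^ 2 + (mu - 1) ^ 2 = r ^ 2)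
    (ha : a = lam * x₁) (hb : b = lam * x₂)
    (hc : c = mu * x₃) (hd : d = mu * x₄) :
    ((a ^ 2 + b ^ 2 + c ^ 2 + d ^ 2) ^ 2
      - 2 * r ^ 2 * (a ^ 2 + b ^ 2 + c ^ 2 + d ^ 2) + (2 - r ^ 2) ^ 2) ^ 2
    = 64 * (a ^ 2 + b ^ 2) * (c ^ 2 + d ^ 2) := by
  have hab : a ^ 2 + b ^ 2 = lam ^ 2 := by
    rw [ha, hb]; linear_combination lam ^ 2 * h1
  have hcd : c ^ 2 + d ^ 2 = mu ^ 2 := by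
    rw [hc, hd]; linear_combination mu ^ 2 * h2
  have hS : a ^ 2 + b ^ 2 + c ^ 2 + d ^ 2 = lam ^ 2 + mu ^ 2 := by
    linear_combination hab + hcd
  -- With `S = lam² + mu²`, the circle equation reads `S + 2 - r² = 2 (lam + mu)`; squaring it
  -- and using `(lam + mu)² = S + 2 lam mu` shows that the quartic equals `8 lam mu`.
  have key : (lam ^ 2 + mu ^ 2) ^ 2 - 2 * r ^ 2 * (lam ^ 2 + mu ^ 2) + (2 - r ^ 2) ^ 2
      = 8 * (lam * mu) := by
    rw [← h3]; ring
  rw [hS, hab, hcd, key]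
  ring
end
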